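/- arXiv:0811.2507 — 2 statements merged into one kernel-verified Lean document; each statement's English description precedes it below -/
import Mathlib

section
/- Let M be the 4 × 4 integer matrix [[1,1,0,0],[1,1,0,0],[0,0,1,1],[0,0,1,1]], acting ℤ-linearly on ℤ⁴ by v ↦ M·v. Then the direct limit of the ℕ-indexed system ℤ⁴ →^M ℤ⁴ →^M ⋯ (bonding map from stage i to stage j equal to M^{j−i}) is isomorphic, as an abelian group, to ℤ[1/2] ⊕ ℤ[1/2]. -/
/-!
The matrix factors as `M = B * A` through `ℤ²`, with `A * B = 2`: `A` adds up the entries of each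
block and `B` duplicates them. The direct limits of the iterates of `B * A` and of `A * B` agree,
since `A` and `B` induce maps between them that are mutually inverse up to a shift of the index.
Finally, the limit of the iterates of multiplication by `2` is the localization away from `2`, the
`n`-th stage being the fractions with denominator `2 ^ n`.
-/

/-- The direct limit of `M →ᵀ M →ᵀ M →ᵀ ⋯`, indexed by `ℕ`, for an endomorphism `T` of `M`. -/
abbrev IterateLimit {R M : Type*} [Semiring R] [AddCommMonoid M] [Module R M]
    (T : Module.End R M) : Type _ :=
  Module.DirectLimit (fun _ : ℕ => M) (fun i j _ => T ^ (j - i))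

namespace IterateLimit

section Semiring

variable {R M N : Type*} [Semiring R] [AddCommMonoid M] [Module R M] [AddCommMonoid N] [Module R N]

/-- The canonical map from the `n`-th copy of `M` to the direct limit of the iterates of `T`. -/
noncomputable abbrev of (T : Module.End R M) (n : ℕ) : M →ₗ[R] IterateLimit T :=
  Module.DirectLimit.of R ℕ (fun _ : ℕ => M) (fun i j _ => T ^ (j - i)) n

instance directedSystem_pow_sub (T : Module.End R M) :
    DirectedSystem (fun _ : ℕ => M) (fun i j _ => ⇑(T ^ (j - i))) where
  map_self i x := by simp
  map_map i j k hij hjk x := by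
    rw [← Module.End.mul_apply, ← pow_add, tsub_add_tsub_cancel hjk hij]

theorem of_add_pow_apply (T : Module.End R M) (n k : ℕ) (x : M) :
    of T (n + k) ((T ^ k) x) = of T n x := by
  simpa only [Nat.add_sub_cancel_left] using
    Module.DirectLimit.of_f (f := fun i j _ => T ^ (j - i)) (hij := n.le_add_right k) (x := x)

theorem of_succ_apply (T : Module.End R M) (n : ℕ) (x : M) : of T (n + 1) (T x) = of T n x := by
  simpa only [pow_one] using of_add_pow_apply T n 1 x

theorem of_eq_of_iff {T : Module.End R M} {n : ℕ} {x y : M} :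
    of T n x = of T n y ↔ ∃ k, (T ^ k) x = (T ^ k) y := by
  constructor
  · intro h
    obtain ⟨j, _, hj⟩ := Module.DirectLimit.exists_eq_of_of_eq h
    exact ⟨j - n, hj⟩
  · rintro ⟨k, hk⟩
    rw [← of_add_pow_apply T n k x, hk, of_add_pow_apply]

/-- The map of direct limits induced by `f : M → N` intertwining `T` and `U`, followed by the
shift by `s` of the index. -/
noncomputable def mapShift {T : Module.End R M} {U : Module.End R N} (f : M →ₗ[R] N)
    (h : f ∘ₗ T = U ∘ₗ f) (s : ℕ) : IterateLimit T →ₗ[R] IterateLimit U :=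
  Module.DirectLimit.lift R ℕ _ _ (fun n => of U (n + s) ∘ₗ f) fun i j hij x => by
    obtain ⟨k, rfl⟩ := Nat.exists_eq_add_of_le hij
    have hk : f ((T ^ k) x) = (U ^ k) (f x) :=
      LinearMap.congr_fun (Module.End.commute_pow_left_of_commute h.symm k).symm x
    rw [Nat.add_sub_cancel_left, LinearMap.comp_apply, LinearMap.comp_apply, hk,
      Nat.add_right_comm, of_add_pow_apply]

@[simp]
theorem mapShift_of {T : Module.End R M} {U : Module.End R N} (f : M →ₗ[R] N)
    (h : f ∘ₗ T = U ∘ₗ f) (s n : ℕ) (x : M) : mapShift f h s (of T n x) = of U (n + s) (f x) :=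
  Module.DirectLimit.lift_of _ _ _

/-- The direct limits of the iterates of `g ∘ₗ f` and of `f ∘ₗ g` are isomorphic. -/
noncomputable def compCommEquiv (f : M →ₗ[R] N) (g : N →ₗ[R] M) :
    IterateLimit (g ∘ₗ f) ≃ₗ[R] IterateLimit (f ∘ₗ g) :=
  LinearEquiv.ofLinearMap (mapShift f rfl 0) (mapShift g rfl 1)
    (by
      ext n y
      simpa using of_succ_apply (f ∘ₗ g) n y)
    (by
      ext n x
      simpa using of_succ_apply (g ∘ₗ f) n x)

end Semiring

section CommSemiring

variable {R M N N' : Type*} [CommSemiring R] [AddCommMonoid M] [Module R M]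
  [AddCommMonoid N] [Module R N] [AddCommMonoid N'] [Module R N']

theorem smul_of_algebraMap_succ (r : R) (n : ℕ) (x : M) :
    r • of (algebraMap R (Module.End R M) r) (n + 1) x =
      of (algebraMap R (Module.End R M) r) n x := by
  rw [← map_smul, ← of_succ_apply _ n, Module.algebraMap_end_apply]

theorem bijective_smul_algebraMap (r : R) :
    Function.Bijective fun z : IterateLimit (algebraMap R (Module.End R M) r) => r • z := by
  constructor
  · intro z w hzw
    obtain ⟨n, x, y, rfl, rfl⟩ := Module.DirectLimit.exists_of₂ z w
    obtain ⟨k, hk⟩ : ∃ k, (algebraMap R (Module.End R M) r ^ k) (r • x) =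
        (algebraMap R (Module.End R M) r ^ k) (r • y) :=
      of_eq_of_iff.mp (by simpa only [map_smul] using hzw)
    refine of_eq_of_iff.mpr ⟨k + 1, ?_⟩
    simpa only [pow_succ, Module.End.mul_apply, Module.algebraMap_end_apply] using hk
  · intro z
    obtain ⟨n, x, rfl⟩ := Module.DirectLimit.exists_of z
    exact ⟨of _ (n + 1) x, smul_of_algebraMap_succ r n x⟩

theorem isLocalizedModuleAway_of_zero (r : R) :
    IsLocalizedModule.Away r (of (algebraMap R (Module.End R M) r) 0) := by
  refine IsLocalizedModule.Away.mk
    ((Module.End.isUnit_iff _).mpr (bijective_smul_algebraMap r)) (fun z => ?_) fun x y hxy => ?_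
  · obtain ⟨n, x, rfl⟩ := Module.DirectLimit.exists_of z
    refine ⟨n, x, ?_⟩
    have hn := of_add_pow_apply (algebraMap R (Module.End R M) r) 0 n x
    rwa [← map_pow, Module.algebraMap_end_apply, map_smul, Nat.zero_add] at hn
  · obtain ⟨k, hk⟩ := of_eq_of_iff.mp hxy
    exact ⟨k, by simpa only [← map_pow, Module.algebraMap_end_apply] using hk⟩

/-- If `f ∘ₗ g` is multiplication by `r` on `N`, then the direct limit of the iterates of `g ∘ₗ f`
is the localization `N'` of `N` away from `r`. -/
noncomputable def equivOfIsLocalizedModuleAway {r : R} {f : M →ₗ[R] N} {g : N →ₗ[R] M}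
    (hfg : f ∘ₗ g = algebraMap R (Module.End R N) r) (φ : N →ₗ[R] N')
    [IsLocalizedModule.Away r φ] : IterateLimit (g ∘ₗ f) ≃ₗ[R] N' :=
  have : IsLocalizedModule.Away r (of (f ∘ₗ g) 0) := hfg ▸ isLocalizedModuleAway_of_zero r
  (compCommEquiv f g).trans
    (IsLocalizedModule.linearEquiv (Submonoid.powers r) (of (f ∘ₗ g) 0) φ)

end CommSemiring

theorem nonempty_linearEquiv_pi_of_mul_eq_scalar {R m n : Type*} [CommSemiring R] [Fintype m]
    [DecidableEq m] [Fintype n] [DecidableEq n] {r : R} {A : Matrix m n R} {B : Matrix n m R}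
    (hAB : A * B = Matrix.scalar m r) (S : Type*) [CommSemiring S] [Algebra R S]
    [IsLocalization.Away r S] : Nonempty (IterateLimit (B * A).toLin' ≃ₗ[R] (m → S)) := by
  have hAB' : A.toLin' ∘ₗ B.toLin' = algebraMap R (Module.End R (m → R)) r := by
    rw [← Matrix.toLin'_mul, hAB]
    exact Matrix.toLinAlgEquiv'.commutes r
  rw [Matrix.toLin'_mul]
  exact ⟨equivOfIsLocalizedModuleAway hAB'
    (.pi fun i => Algebra.linearMap R S ∘ₗ .proj i : (m → R) →ₗ[R] (m → S))⟩

end IterateLimit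

/-- The direct limit of the ℕ-indexed system `ℤ⁴ →^M ℤ⁴ →^M ⋯` for
`M = [[1,1,0,0],[1,1,0,0],[0,0,1,1],[0,0,1,1]]` (bonding map from stage `i` to
stage `j` given by `M^(j-i)`) is isomorphic, as an abelian group, to `ℤ[1/2] ⊕ ℤ[1/2]`. -/
theorem stmt_9 :
    Nonempty
      (Module.DirectLimit (R := ℤ) (ι := ℕ) (fun _ : ℕ => Fin 4 → ℤ)
          (fun i j _ =>
            (Matrix.toLin'
              (!![1, 1, 0, 0; 1, 1, 0, 0; 0, 0, 1, 1; 0, 0, 1, 1] :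
                Matrix (Fin 4) (Fin 4) ℤ)) ^ (j - i)) ≃+
        Localization.Away (2 : ℤ) × Localization.Away (2 : ℤ)) := by
  let A : Matrix (Fin 2) (Fin 4) ℤ := !![1, 1, 0, 0; 0, 0, 1, 1]
  let B : Matrix (Fin 4) (Fin 2) ℤ := !![1, 0; 1, 0; 0, 1; 0, 1]
  have hBA : !![1, 1, 0, 0; 1, 1, 0, 0; 0, 0, 1, 1; 0, 0, 1, 1] = B * A := by decide
  have hAB : A * B = Matrix.scalar (Fin 2) 2 := by decide
  obtain ⟨e⟩ :=
    IterateLimit.nonempty_linearEquiv_pi_of_mul_eq_scalar hAB (Localization.Away (2 : ℤ))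
  rw [hBA]
  -- Not `e.toAddEquiv`: it infers the `ℤ`-module structure of `ℤ[1/2]` as an additive group,
  -- which does not unify with its structure as a `ℤ`-algebra.
  exact ⟨(AddEquiv.mk' e.toEquiv e.map_add).trans
    (RingEquiv.piFinTwo fun _ => Localization.Away (2 : ℤ)).toAddEquiv⟩
end

section
/- Let M be the integer matrix [[2, 3], [3, 2]], acting ℤ-linearly on ℤ² by v ↦ M·v. Then the direct limit of the ℕ-indexed system ℤ² →^M ℤ² →^M ⋯ (bonding map from stage i to stage j equal to M^{j−i}) is isomorphic, as an abelian group, to ℤ[1/5] ⊕ ℤ, where ℤ[1/5] denotes the localization of ℤ away from 5. -/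
/-!
The direct limit of `M → M → ⋯` along an endomorphism `f` is the localization of `M` at `f`: it is
any module on which an automorphism extends `f`, provided the comparison map identifies only
elements that some power of `f` identifies and hits every element up to a power of the automorphism.

In the coordinates `(v 0 - v 1, v 1)` the matrix `!![a, b; b, a]` acts by
`(d, x) ↦ ((a - b) d, (a + b) x + b d)`. It need not be diagonalizable over `R`, but if `a - b` is a
unit, this triangular map extends to an automorphism of `R × R[1/(a + b)]`, whatever the entry below
the diagonal, and so the limit is `R × R[1/(a + b)]`.
-/

/-- The linear map `h : M → Q` exhibits `Q`, with its automorphism `F`, as the localization of `M`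
at the endomorphism `f`. The conditions are those of `IsLocalizedModule`, with powers of `f` in
place of a multiplicative set of scalars. -/
structure IsEndLocalization {R M Q : Type*} [Semiring R] [AddCommMonoid M] [Module R M]
    [AddCommMonoid Q] [Module R Q] (f : Module.End R M) (F : Module.End R Q) (h : M →ₗ[R] Q) :
    Prop where
  isUnit : IsUnit F
  comp_eq : F ∘ₗ h = h ∘ₗ f
  exists_pow_apply_eq {x y : M} : h x = h y → ∃ n : ℕ, (f ^ n) x = (f ^ n) y
  exists_apply_eq_pow_apply (q : Q) : ∃ (n : ℕ) (x : M), h x = (F ^ n) q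

namespace IsEndLocalization

section

variable {R M M' Q : Type*} [Semiring R] [AddCommMonoid M] [Module R M] [AddCommMonoid M']
  [Module R M'] [AddCommMonoid Q] [Module R Q] {f : Module.End R M} {f' : Module.End R M'}
  {F : Module.End R Q} {h : M →ₗ[R] Q}

theorem comp_linearEquiv (H : IsEndLocalization f F h) (e : M' ≃ₗ[R] M)
    (he : f ∘ₗ e.toLinearMap = e.toLinearMap ∘ₗ f') :
    IsEndLocalization f' F (h ∘ₗ e.toLinearMap) where
  isUnit := H.isUnit
  comp_eq := by rw [← LinearMap.comp_assoc, H.comp_eq, LinearMap.comp_assoc, he,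
    LinearMap.comp_assoc]
  exists_pow_apply_eq {x y} hxy := by
    obtain ⟨n, hn⟩ := H.exists_pow_apply_eq hxy
    have he_pow := LinearMap.congr_fun (Module.End.commute_pow_left_of_commute he n)
    exact ⟨n, e.injective ((he_pow x).symm.trans (hn.trans (he_pow y)))⟩
  exists_apply_eq_pow_apply q := by
    obtain ⟨n, x, hx⟩ := H.exists_apply_eq_pow_apply q
    exact ⟨n, e.symm x, by simpa using hx⟩

theorem pow_apply_map (H : IsEndLocalization f F h) (n : ℕ) (x : M) :
    (F ^ n) (h x) = h ((f ^ n) x) :=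
  LinearMap.congr_fun (Module.End.commute_pow_left_of_commute H.comp_eq n) x

/-- The map `F⁻ⁱ ∘ h` from the `i`-th module of the system `M → M → ⋯` to the localization. -/
noncomputable def stageMap (H : IsEndLocalization f F h) (i : ℕ) : M →ₗ[R] Q :=
  (LinearEquiv.ofBijective (F ^ i) ((Module.End.isUnit_iff _).1 (H.isUnit.pow i))).symm.toLinearMap
    ∘ₗ h

theorem stageMap_apply_eq_iff (H : IsEndLocalization f F h) {i : ℕ} {x : M} {q : Q} :
    H.stageMap i x = q ↔ h x = (F ^ i) q :=
  LinearEquiv.symm_apply_eq _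

theorem pow_apply_stageMap (H : IsEndLocalization f F h) (i : ℕ) (x : M) :
    (F ^ i) (H.stageMap i x) = h x :=
  (H.stageMap_apply_eq_iff.1 rfl).symm

theorem stageMap_pow_sub_apply (H : IsEndLocalization f F h) {i j : ℕ} (hij : i ≤ j) (x : M) :
    H.stageMap j ((f ^ (j - i)) x) = H.stageMap i x := by
  rw [stageMap_apply_eq_iff, ← H.pow_apply_map, ← H.pow_apply_stageMap i x,
    ← Module.End.mul_apply, ← pow_add, Nat.sub_add_cancel hij]

/-- The comparison map from the direct limit of `M → M → ⋯` to a localization of `M` at `f`. -/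
noncomputable def directLimitLift (H : IsEndLocalization f F h) :
    Module.DirectLimit (fun _ : ℕ => M) (fun i j _ => f ^ (j - i)) →ₗ[R] Q :=
  Module.DirectLimit.lift R ℕ _ _ H.stageMap fun _ _ hij x => H.stageMap_pow_sub_apply hij x

theorem directLimitLift_of (H : IsEndLocalization f F h) (i : ℕ) (x : M) :
    H.directLimitLift (Module.DirectLimit.of R ℕ _ _ i x) = H.stageMap i x :=
  Module.DirectLimit.lift_of H.stageMap (fun _ _ hij x => H.stageMap_pow_sub_apply hij x) x

theorem directLimitLift_injective (H : IsEndLocalization f F h) :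
    Function.Injective H.directLimitLift := by
  intro z w hzw
  obtain ⟨i, x, y, rfl, rfl⟩ := Module.DirectLimit.exists_of₂ z w
  rw [directLimitLift_of, directLimitLift_of, stageMap_apply_eq_iff, pow_apply_stageMap] at hzw
  obtain ⟨n, hn⟩ := H.exists_pow_apply_eq hzw
  have hn' : (f ^ (i + n - i)) x = (f ^ (i + n - i)) y := by rwa [Nat.add_sub_cancel_left]
  have of_pow (v : M) :
      Module.DirectLimit.of R ℕ (fun _ => M) (fun i j _ => f ^ (j - i)) (i + n)
          ((f ^ (i + n - i)) v) = Module.DirectLimit.of R ℕ _ _ i v :=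
    Module.DirectLimit.of_f (hij := Nat.le_add_right i n)
  rw [← of_pow x, hn', of_pow y]

theorem directLimitLift_surjective (H : IsEndLocalization f F h) :
    Function.Surjective H.directLimitLift := by
  intro q
  obtain ⟨n, x, hx⟩ := H.exists_apply_eq_pow_apply q
  exact ⟨Module.DirectLimit.of R ℕ _ _ n x,
    (H.directLimitLift_of n x).trans (H.stageMap_apply_eq_iff.2 hx)⟩

/-- The direct limit of `M → M → ⋯` along `f` is the localization of `M` at `f`. -/
noncomputable def directLimitEquiv (H : IsEndLocalization f F h) :
    Module.DirectLimit (fun _ : ℕ => M) (fun i j _ => f ^ (j - i)) ≃ₗ[R] Q :=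
  LinearEquiv.ofBijective H.directLimitLift
    ⟨H.directLimitLift_injective, H.directLimitLift_surjective⟩

end

theorem of_isLocalizedModule {R N N' : Type*} [CommSemiring R] [AddCommMonoid N] [Module R N]
    [AddCommMonoid N'] [Module R N'] (a : R) (ι : N →ₗ[R] N')
    [IsLocalizedModule (Submonoid.powers a) ι] :
    IsEndLocalization (algebraMap R (Module.End R N) a) (algebraMap R (Module.End R N') a) ι where
  isUnit := IsLocalizedModule.map_units ι (⟨a, Submonoid.mem_powers a⟩ : Submonoid.powers a)
  comp_eq := by ext; simp
  exists_pow_apply_eq hxy := by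
    obtain ⟨⟨_, n, rfl⟩, hn⟩ := IsLocalizedModule.exists_of_eq (S := Submonoid.powers a) hxy
    exact ⟨n, by simpa only [← map_pow, Module.algebraMap_end_apply] using! hn⟩
  exists_apply_eq_pow_apply q := by
    obtain ⟨⟨x, ⟨_, n, rfl⟩⟩, hx⟩ := IsLocalizedModule.surj (Submonoid.powers a) ι q
    exact ⟨n, x, by simpa only [← map_pow, Module.algebraMap_end_apply] using! hx.symm⟩

end IsEndLocalization

section SkewEnd

variable {R P N N' : Type*} [Semiring R] [AddCommMonoid P] [Module R P]

/-- The endomorphism of `P × N` given by the block lower triangular matrix with diagonal blocks `u`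
and `g` and the block `φ` below the diagonal; compare `LinearEquiv.skewProd`. -/
def skewEnd [AddCommMonoid N] [Module R N] (u : Module.End R P) (g : Module.End R N)
    (φ : P →ₗ[R] N) : Module.End R (P × N) :=
  (u ∘ₗ LinearMap.fst R P N).prod (g ∘ₗ LinearMap.snd R P N + φ ∘ₗ LinearMap.fst R P N)

section

variable [AddCommMonoid N] [Module R N] (u : Module.End R P) (g : Module.End R N) (φ : P →ₗ[R] N)

@[simp]
theorem skewEnd_apply (p : P × N) : skewEnd u g φ p = (u p.1, g p.2 + φ p.1) := rfl

theorem skewEnd_pow_apply_zero_mk (n : ℕ) (x : N) :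
    (skewEnd u g φ ^ n) (0, x) = (0, (g ^ n) x) := by
  have skewEnd_comp_inr : skewEnd u g φ ∘ₗ LinearMap.inr R P N = LinearMap.inr R P N ∘ₗ g := by
    ext <;> simp
  exact LinearMap.congr_fun (Module.End.commute_pow_left_of_commute skewEnd_comp_inr n) x

theorem skewEnd_pow_apply_mk (n : ℕ) (y : P) (x : N) :
    (skewEnd u g φ ^ n) (y, x) = (skewEnd u g φ ^ n) (y, 0) + (0, (g ^ n) x) := by
  rw [← skewEnd_pow_apply_zero_mk u g φ, ← map_add, Prod.mk_add_mk, add_zero, zero_add]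

end

theorem isUnit_skewEnd [AddCommGroup N] [Module R N] {u : Module.End R P} {g : Module.End R N}
    (hu : IsUnit u) (hg : IsUnit g) (φ : P →ₗ[R] N) : IsUnit (skewEnd u g φ) := by
  rw [Module.End.isUnit_iff] at hu hg ⊢
  exact ((LinearEquiv.ofBijective u hu).skewProd (LinearEquiv.ofBijective g hg) φ).bijective

theorem IsEndLocalization.skewEnd_of_isUnit [AddCommMonoid N] [Module R N] [AddCommGroup N']
    [Module R N'] {g : Module.End R N} {g' : Module.End R N'} {ι : N →ₗ[R] N'}
    (H : IsEndLocalization g g' ι) {u : Module.End R P} (hu : IsUnit u) (φ : P →ₗ[R] N) :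
    IsEndLocalization (skewEnd u g φ) (skewEnd u g' (ι ∘ₗ φ)) (LinearMap.id.prodMap ι) := by
  have comp_eq : skewEnd u g' (ι ∘ₗ φ) ∘ₗ LinearMap.id.prodMap ι =
      LinearMap.id.prodMap ι ∘ₗ skewEnd u g φ := by
    have map_apply (x : N) : g' (ι x) = ι (g x) := LinearMap.congr_fun H.comp_eq x
    ext <;> simp [map_apply]
  refine ⟨isUnit_skewEnd hu H.isUnit _, comp_eq, ?_, ?_⟩
  · rintro ⟨y, x₁⟩ ⟨y₂, x₂⟩ hxy
    obtain ⟨rfl, hx⟩ : y = y₂ ∧ ι x₁ = ι x₂ := Prod.ext_iff.1 hxy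
    obtain ⟨n, hn⟩ := H.exists_pow_apply_eq hx
    exact ⟨n, by rw [skewEnd_pow_apply_mk, hn, ← skewEnd_pow_apply_mk]⟩
  · rintro ⟨y, x'⟩
    obtain ⟨n, x, hx⟩ := H.exists_apply_eq_pow_apply x'
    have map_pow_apply :
        LinearMap.id.prodMap ι ((skewEnd u g φ ^ n) (y, 0)) =
          (skewEnd u g' (ι ∘ₗ φ) ^ n) (y, 0) := by
      simpa using
        (LinearMap.congr_fun (Module.End.commute_pow_left_of_commute comp_eq n) (y, 0)).symm
    refine ⟨n, (skewEnd u g φ ^ n) (y, 0) + (0, x), ?_⟩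
    rw [map_add, map_pow_apply, skewEnd_pow_apply_mk _ _ _ n y x', ← hx]
    simp

end SkewEnd

section SymmetricMatrix

variable {R : Type*} [CommRing R]

/-- The coordinates `v ↦ (v 0 - v 1, v 1)` of the basis `(1, 0)`, `(1, 1)` of `R²`, in which
symmetric matrices `!![a, b; b, a]` become lower triangular. -/
def subSndEquiv : (Fin 2 → R) ≃ₗ[R] R × R where
  toFun v := (v 0 - v 1, v 1)
  invFun p := ![p.1 + p.2, p.2]
  map_add' v w := by ext <;> simp [add_sub_add_comm]
  map_smul' r v := by ext <;> simp [mul_sub]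
  left_inv v := by ext i; fin_cases i <;> simp
  right_inv p := by simp

theorem subSndEquiv_apply (v : Fin 2 → R) : subSndEquiv v = (v 0 - v 1, v 1) := rfl

theorem subSndEquiv_conj_symmetric (a b : R) :
    skewEnd (algebraMap R (Module.End R R) (a - b)) (algebraMap R (Module.End R R) (a + b))
        (LinearMap.lsmul R R b) ∘ₗ subSndEquiv.toLinearMap =
      subSndEquiv.toLinearMap ∘ₗ Matrix.toLin' !![a, b; b, a] := by
  refine LinearMap.ext fun v => ?_
  simp only [LinearMap.comp_apply, LinearEquiv.coe_coe, subSndEquiv_apply, skewEnd_apply,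
    Module.algebraMap_end_apply, LinearMap.lsmul_apply, smul_eq_mul, Matrix.toLin'_apply,
    Matrix.mulVec_fin_two, Matrix.of_apply, Matrix.cons_val]
  ext <;> ring

end SymmetricMatrix

theorem stmt_11_general {R A : Type*} [CommRing R] [CommRing A] [Algebra R A] {a b : R}
    (hab : IsUnit (a - b)) [IsLocalization.Away (a + b) A] :
    Nonempty
      (Module.DirectLimit (R := R) (ι := ℕ) (fun _ : ℕ => Fin 2 → R)
          (fun i j _ => Matrix.toLin' !![a, b; b, a] ^ (j - i)) ≃ₗ[R] A × R) := by
  have localization_diagonal :=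
    IsEndLocalization.of_isLocalizedModule (a + b) (Algebra.linearMap R A)
  have localization_triangular := localization_diagonal.skewEnd_of_isUnit
    (hab.map (algebraMap R (Module.End R R))) (LinearMap.lsmul R R b)
  have localization_matrix :=
    localization_triangular.comp_linearEquiv subSndEquiv (subSndEquiv_conj_symmetric a b)
  exact ⟨localization_matrix.directLimitEquiv.trans (LinearEquiv.prodComm R R A)⟩

/-- The direct limit of the ℕ-indexed system `ℤ² →^M ℤ² →^M ⋯` for
`M = [[2,3],[3,2]]` (bonding map from stage `i` to stage `j` given by `M^(j-i)`)
is isomorphic, as an abelian group, to `ℤ[1/5] ⊕ ℤ`. -/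
theorem stmt_11 :
    Nonempty
      (Module.DirectLimit (R := ℤ) (ι := ℕ) (fun _ : ℕ => Fin 2 → ℤ)
          (fun i j _ => (Matrix.toLin' (!![2, 3; 3, 2] : Matrix (Fin 2) (Fin 2) ℤ)) ^ (j - i)) ≃+
        Localization.Away (5 : ℤ) × ℤ) := by
  have : IsLocalization.Away (2 + 3 : ℤ) (Localization.Away (5 : ℤ)) :=
    inferInstanceAs (IsLocalization.Away (5 : ℤ) _)
  exact (stmt_11_general (a := (2 : ℤ)) (b := 3) (by decide)).map (AddEquivClass.toAddEquiv ·)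
end
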